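/- For reals μ̂, σ̂, ε_μ, ε_σ, m_σ, M_μ with 0 < m_σ ≤ σ̂, 0 < μ̂ ≤ M_μ, ε_μ ≥ 0, ε_σ ≥ 0, the following inequality holds: (μ̂ − 2ε_μ)/(√5 σ̂ + 2ε_σ) ≥ μ̂/(√5 σ̂) − 2 M_μ ε_σ / (√5 m_σ (√5 m_σ + 2 ε_σ)) − 2 ε_μ / (√5 m_σ + 2 ε_σ). -/

import Mathlib

/-- Algebraic inequality used in the proof of Lemma 1:
`(μ̂ - 2ε_μ)/(√5 σ̂ + 2ε_σ) ≥ μ̂/(√5 σ̂) - 2 M_μ ε_σ/(√5 m_σ(√5 m_σ + 2ε_σ)) - 2ε_μ/(√5 m_σ + 2ε_σ)`. -/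
theorem cdr_algebraic_bound
    (μhat σhat εμ εσ mσ Mμ : ℝ)
    (hmσ : 0 < mσ) (hσlow : mσ ≤ σhat)
    (hμpos : 0 < μhat) (hMμ : μhat ≤ Mμ)
    (hεμ : 0 ≤ εμ) (hεσ : 0 ≤ εσ) :
    (μhat - 2 * εμ) / (Real.sqrt 5 * σhat + 2 * εσ) ≥
      μhat / (Real.sqrt 5 * σhat) -
        2 * Mμ * εσ / (Real.sqrt 5 * mσ * (Real.sqrt 5 * mσ + 2 * εσ)) -
        2 * εμ / (Real.sqrt 5 * mσ + 2 * εσ) := by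
  have hσ : 0 < σhat := hmσ.trans_le hσlow
  have hM : 0 ≤ Mμ := hμpos.le.trans hMμ
  have hsplit : (μhat - 2 * εμ) / (Real.sqrt 5 * σhat + 2 * εσ) =
      μhat / (Real.sqrt 5 * σhat) -
        2 * μhat * εσ / (Real.sqrt 5 * σhat * (Real.sqrt 5 * σhat + 2 * εσ)) -
        2 * εμ / (Real.sqrt 5 * σhat + 2 * εσ) := by
    have hden : Real.sqrt 5 * σhat + 2 * εσ ≠ 0 := by positivity
    field_simp
    ring
  have hσ_term : 2 * μhat * εσ / (Real.sqrt 5 * σhat * (Real.sqrt 5 * σhat + 2 * εσ)) ≤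
      2 * Mμ * εσ / (Real.sqrt 5 * mσ * (Real.sqrt 5 * mσ + 2 * εσ)) := by
    gcongr
  have hμ_term : 2 * εμ / (Real.sqrt 5 * σhat + 2 * εσ) ≤
      2 * εμ / (Real.sqrt 5 * mσ + 2 * εσ) := by
    gcongr
  rw [hsplit]
  linarith
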